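/- Let n be a positive integer with 2-adic valuation d and odd part k_s (so n = 2^d · k_s with k_s odd). Then every decomposition of n has odd length if and only if k_s < 2^(d+1) (equivalently, k_s^2 < 2n). -/

import Mathlib

/-- `IsDecomp n a m` means the `m` consecutive positive integers
`a+1, a+2, …, a+m` form a decomposition of `n`. -/
def IsDecomp (n a m : ℕ) : Prop :=
  1 ≤ m ∧ (Finset.range m).sum (fun i => a + i + 1) = n

/-!
Summing the arithmetic progression shows that the decompositions of `n` of length `m` correspond to
the factorizations `2 * n = m * c` with `m < c` and `m`, `c` of opposite parity. When `m` is even,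
`c` is odd, so `m` absorbs the whole power of two `2 ^ (d + 1)` in `2 * n` and `c` divides the odd
part `k`; hence `2 ^ (d + 1) ≤ m < c ≤ k`. Conversely, if `2 ^ (d + 1) < k`, the factorization
`2 * n = 2 ^ (d + 1) * k` itself gives a decomposition of even length.
-/

theorem two_mul_sum_range_add_add_one {R : Type*} [CommSemiring R] (a : R) (m : ℕ) :
    2 * ∑ i ∈ Finset.range m, (a + i + 1) = m * (2 * a + m + 1) := by
  induction m with
  | zero => simp
  | succ m ih => rw [Finset.sum_range_succ, mul_add, ih]; push_cast; ring

theorem isDecomp_iff_mul_eq_two_mul {n a m : ℕ} :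
    IsDecomp n a m ↔ 0 < m ∧ m * (2 * a + m + 1) = 2 * n := by
  have hsum := two_mul_sum_range_add_add_one a m
  simp only [Nat.cast_id] at hsum
  rw [← hsum, Nat.mul_right_inj two_ne_zero]
  rfl

theorem exists_isDecomp_iff_exists_mul_eq_two_mul {n m : ℕ} :
    (∃ a, IsDecomp n a m) ↔ 0 < m ∧ ∃ c, m < c ∧ Odd (m + c) ∧ m * c = 2 * n := by
  simp only [isDecomp_iff_mul_eq_two_mul]
  constructor
  · rintro ⟨a, hm, hmul⟩
    exact ⟨hm, 2 * a + m + 1, by omega, ⟨a + m, by ring⟩, hmul⟩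
  · rintro ⟨hm, c, hmc, ⟨s, hs⟩, hmul⟩
    have hc : 2 * (s - m) + m + 1 = c := by omega
    exact ⟨s - m, hm, by rw [hc, hmul]⟩

theorem dvd_and_dvd_of_coprime_of_mul_eq_mul {b c k m : ℕ} (hbc : b.Coprime c)
    (hmul : m * c = b * k) : b ∣ m ∧ c ∣ k :=
  ⟨hbc.dvd_of_dvd_mul_right (Dvd.intro k hmul.symm),
    hbc.symm.dvd_of_dvd_mul_left (Dvd.intro_left m hmul)⟩

theorem exists_even_isDecomp_two_pow_mul_iff {d k : ℕ} (hk : Odd k) :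
    (∃ m, Even m ∧ ∃ a, IsDecomp (2 ^ d * k) a m) ↔ 2 ^ (d + 1) < k := by
  simp only [exists_isDecomp_iff_exists_mul_eq_two_mul, ← mul_assoc, ← pow_succ']
  constructor
  · rintro ⟨m, hm_even, hm_pos, c, hmc, hodd, hmul⟩
    have hc : Odd c := (Nat.odd_add'.mp hodd).mpr hm_even
    have hcop : (2 ^ (d + 1)).Coprime c := hc.coprime_two_left.pow_left (d + 1)
    obtain ⟨hpow_dvd, hc_dvd⟩ := dvd_and_dvd_of_coprime_of_mul_eq_mul hcop hmul
    calc 2 ^ (d + 1) ≤ m := Nat.le_of_dvd hm_pos hpow_dvd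
      _ < c := hmc
      _ ≤ k := Nat.le_of_dvd hk.pos hc_dvd
  · intro hlt
    have heven : Even (2 ^ (d + 1)) := even_two.pow_of_ne_zero d.succ_ne_zero
    exact ⟨2 ^ (d + 1), heven, by positivity, k, hlt, heven.add_odd hk, rfl⟩

theorem all_odd_isDecomp_two_pow_mul_iff {d k : ℕ} (hk : Odd k) :
    (∀ a m, IsDecomp (2 ^ d * k) a m → Odd m) ↔ k < 2 ^ (d + 1) := by
  have hne : k ≠ 2 ^ (d + 1) := by
    rintro rfl
    exact Nat.not_even_iff_odd.mpr hk (even_two.pow_of_ne_zero d.succ_ne_zero)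
  rw [← hne.le_iff_lt, ← not_lt, ← exists_even_isDecomp_two_pow_mul_iff hk]
  push Not
  simp only [← Nat.not_even_iff_odd]
  exact ⟨fun h m hm a ha => h a m ha hm, fun h a m ha hm => h m hm a ha⟩

/-- Let `n` be a positive integer with 2-adic valuation `d` and odd part `ks`
(so `n = 2^d * ks` with `ks` odd). Then every decomposition of `n` has odd
length if and only if `ks < 2^(d+1)` (equivalently, `ks² < 2n`). -/
theorem all_decompositions_odd_iff (n d ks : ℕ) (hn : 0 < n)
    (hks : Odd ks) (hfact : n = 2 ^ d * ks) :
    ((∀ a m : ℕ, IsDecomp n a m → Odd m) ↔ ks < 2 ^ (d + 1)) ∧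
      (ks < 2 ^ (d + 1) ↔ ks ^ 2 < 2 * n) := by
  subst hfact
  refine ⟨all_odd_isDecomp_two_pow_mul_iff hks, ?_⟩
  rw [← mul_assoc, ← pow_succ', sq, Nat.mul_lt_mul_right hks.pos]
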